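/- arXiv:2104.05555 — 3 statements merged into one kernel-verified Lean document; each statement's English description precedes it below -/
import Mathlib

section
/- The function P(X) = trace(X³) on 3×3 complex matrices satisfies P(g X g⁻¹) = P(X) for every g ∈ GL(3,ℂ) and every X ∈ M₃(ℂ), and yet there exists a traceless matrix X ∈ M₃(ℂ) (e.g. X = diag(1,1,−2)) with trace(X³) ≠ trace((−X)³). Consequently, for the two moment maps ν₁(g,X) = X and ν₂(g,X) = −g⁻¹Xg on GL(3,ℂ) × M₃(ℂ), the invariant polynomial P satisfies P∘ν₁ ≠ P∘ν₂. -/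
/-- The invariant polynomial `P(X) = trace (X^3)` on `M₃(ℂ)` is
conjugation-invariant, yet there is a traceless `X` with
`trace (X^3) ≠ trace ((-X)^3)`; consequently `P ∘ ν₁ ≠ P ∘ ν₂` for the moment
maps `ν₁(g,X) = X` and `ν₂(g,X) = -g⁻¹ X g` on `GL(3,ℂ) × M₃(ℂ)`. -/
theorem stmt_0 :
    (∀ (g : (Matrix (Fin 3) (Fin 3) ℂ)ˣ) (X : Matrix (Fin 3) (Fin 3) ℂ),
        Matrix.trace (((g : Matrix (Fin 3) (Fin 3) ℂ) * X * (↑g⁻¹ : Matrix (Fin 3) (Fin 3) ℂ)) ^ 3)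
          = Matrix.trace (X ^ 3)) ∧
    (∃ X : Matrix (Fin 3) (Fin 3) ℂ, Matrix.trace X = 0 ∧
        Matrix.trace (X ^ 3) ≠ Matrix.trace ((-X) ^ 3)) ∧
    ((fun p : (Matrix (Fin 3) (Fin 3) ℂ)ˣ × Matrix (Fin 3) (Fin 3) ℂ =>
        Matrix.trace ((p.2) ^ 3)) ≠
      (fun p : (Matrix (Fin 3) (Fin 3) ℂ)ˣ × Matrix (Fin 3) (Fin 3) ℂ =>
        Matrix.trace ((-((↑p.1⁻¹ : Matrix (Fin 3) (Fin 3) ℂ) * p.2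
          * (p.1 : Matrix (Fin 3) (Fin 3) ℂ))) ^ 3))) := by
  have key : ∃ X : Matrix (Fin 3) (Fin 3) ℂ, Matrix.trace X = 0 ∧
      Matrix.trace (X ^ 3) ≠ Matrix.trace ((-X) ^ 3) := by
    -- The two traces are `1 + 1 - 8 = -6` and `6`.
    refine ⟨Matrix.diagonal ![1, 1, -2], ?_, ?_⟩
    · simp [Matrix.trace_diagonal, Fin.sum_univ_three]
      norm_num
    · rw [Odd.neg_pow (by decide), Matrix.diagonal_pow, Matrix.trace_neg,
        Matrix.trace_diagonal]
      simp [Fin.sum_univ_three]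
      norm_num
  refine ⟨fun g X => ?_, key, fun h => ?_⟩
  · rw [Units.conj_pow, Matrix.trace_units_conj]
  · obtain ⟨X, -, hX⟩ := key
    -- At `g = 1` the moment maps take the values `X` and `-X`.
    exact hX (by simpa using congrFun h (1, X))
end

section
/- Let 𝒮 ⊂ M_k(ℂ) be the set of companion matrices, and define F : GL(k,ℂ) × GL(k,ℂ) × 𝒮 → GL(k,ℂ) × M_k(ℂ) by F(g₁, g₂, X) = (g₁g₂, g₁Xg₁⁻¹). Then: (i) the image of F is exactly GL(k,ℂ) × {regular (nonderogatory) matrices}; and (ii) F(g₁, g₂, X) = F(h₁, h₂, Y) if and only if Y = X and there exists u ∈ GL(k,ℂ) with uX = Xu, h₁ = g₁u and h₂ = u⁻¹g₂. Hence F induces a bijection from the quotient of GL(k,ℂ) × GL(k,ℂ) × 𝒮 by the relation (g₁,g₂,X) ∼ (g₁u, u⁻¹g₂, X), u ∈ Z_{GL(k,ℂ)}(X), onto GL(k,ℂ) × 𝔤𝔩(k,ℂ)^{reg}. -/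
/-!
The first basis vector `e₀` is cyclic for a companion matrix `C(p)`, with `C(p)ⁱ e₀ = eᵢ`; hence the
minimal polynomial of `C(p)` is `p` (`minpoly_companionMatrix`). The minimal polynomial is a
conjugation invariant, so conjugates of companion matrices are regular, and two conjugate companion
matrices coincide; that settles one inclusion of the image and gives `Y = X` in the description of
the fibres, where the centralizer element is then `u = g₁⁻¹ h₁`.

Conversely, a regular matrix `A` has a cyclic vector `v`, by the structure theorem for modules over
the PID `ℂ[t]`. In the basis `v, Av, …, Aᵏ⁻¹v` it becomes the companion matrix of its minimal
polynomial (`exists_conj_companionMatrix`).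
-/

open Matrix

/-- The companion matrix of a monic polynomial `p = t^k + a_{k-1} t^{k-1} + ⋯ + a_0`. -/
def companionMatrix {k : ℕ} (p : Polynomial ℂ) : Matrix (Fin k) (Fin k) ℂ :=
  Matrix.of fun i j =>
    if (j : ℕ) = k - 1 then -p.coeff (i : ℕ)
    else if (i : ℕ) = (j : ℕ) + 1 then 1 else 0

/-- The Slodowy slice `𝒮` of companion matrices in `M_k(ℂ)`. -/
def slodowySlice (k : ℕ) : Set (Matrix (Fin k) (Fin k) ℂ) :=
  {C | ∃ p : Polynomial ℂ, p.Monic ∧ p.natDegree = k ∧ C = companionMatrix p}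

open Polynomial in
lemma aeval_mulVec_eq_sum {k n : ℕ} (M : Matrix (Fin k) (Fin k) ℂ) (v : Fin k → ℂ) (q : ℂ[X])
    (hq : q.natDegree < n) :
    aeval M q *ᵥ v = ∑ i : Fin n, q.coeff i • (M ^ (i : ℕ) *ᵥ v) := by
  rw [aeval_eq_sum_range' hq, Matrix.sum_mulVec,
    Finset.sum_range (fun i => (q.coeff i • M ^ i) *ᵥ v)]
  simp only [Matrix.smul_mulVec]

/-- The first basis vector is cyclic for a companion matrix. -/
lemma companionMatrix_pow_mulVec {k : ℕ} (p : Polynomial ℂ) (hk : 0 < k) (i : ℕ) (hi : i < k) :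
    (companionMatrix p : Matrix (Fin k) (Fin k) ℂ) ^ i *ᵥ Pi.single ⟨0, hk⟩ 1
      = Pi.single ⟨i, hi⟩ 1 := by
  induction i with
  | zero => rw [pow_zero, Matrix.one_mulVec]
  | succ i ih =>
    rw [pow_succ', ← Matrix.mulVec_mulVec, ih (by omega), Matrix.mulVec_single_one]
    ext j
    have h1 : i ≠ k - 1 := by omega
    simp [companionMatrix, Pi.single_apply, Fin.ext_iff, h1]

lemma companionMatrix_last {k : ℕ} (p : Polynomial ℂ) (hk : 0 < k) :
    (companionMatrix p : Matrix (Fin k) (Fin k) ℂ) ^ k *ᵥ Pi.single ⟨0, hk⟩ 1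
      = fun i : Fin k => -p.coeff i := by
  obtain ⟨n, rfl⟩ : ∃ n, k = n + 1 := ⟨k - 1, by omega⟩
  rw [pow_succ', ← Matrix.mulVec_mulVec, companionMatrix_pow_mulVec p hk n (by omega),
    Matrix.mulVec_single_one]
  ext j
  simp [companionMatrix]

/-- Evaluating at the cyclic vector `e₀` reads off coefficients, so no nonzero polynomial of degree
below `k` kills the matrix, whereas `p` does. -/
lemma minpoly_companionMatrix {k : ℕ} (p : Polynomial ℂ) (hp : p.Monic) (hd : p.natDegree = k) :
    minpoly ℂ (companionMatrix p : Matrix (Fin k) (Fin k) ℂ) = p := by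
  rcases Nat.eq_zero_or_pos k with rfl | hk
  · rw [hp.natDegree_eq_zero.mp hd]
    exact minpoly.subsingleton _ _
  set C : Matrix (Fin k) (Fin k) ℂ := companionMatrix p with hC
  set e : Fin k → ℂ := Pi.single ⟨0, hk⟩ 1 with he
  have hlow : ∀ q : Polynomial ℂ,
      ∑ i : Fin k, q.coeff i • (C ^ (i : ℕ) *ᵥ e) = fun i : Fin k => q.coeff i := by
    intro q
    ext j
    rw [Finset.sum_congr rfl fun i _ => by rw [companionMatrix_pow_mulVec p hk i i.2]]
    simp [Finset.sum_apply, Pi.single_apply]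
  have hpe : Polynomial.aeval C p *ᵥ e = 0 := by
    rw [aeval_mulVec_eq_sum C e p (n := k + 1) (by omega), Fin.sum_univ_castSucc]
    simp only [Fin.val_castSucc, Fin.val_last]
    rw [hlow, companionMatrix_last p hk, ← hd, hp.coeff_natDegree]
    ext j
    simp
  symm
  refine minpoly.unique' _ _ hp ?_ ?_
  · refine Matrix.ext_of_mulVec_single fun j => ?_
    rw [← companionMatrix_pow_mulVec p hk j j.2, Matrix.mulVec_mulVec]
    have hc : Polynomial.aeval C p * C ^ (j : ℕ) = C ^ (j : ℕ) * Polynomial.aeval C p := by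
      have := Polynomial.aeval_X_pow (R := ℂ) C (n := (j : ℕ))
      rw [← this, ← map_mul, ← map_mul, mul_comm]
    rw [hc, ← Matrix.mulVec_mulVec, hpe]
    simp
  · intro q hq
    by_contra! hcon
    obtain ⟨hq0, hqC⟩ := hcon
    have hqk : q.natDegree < k := hd ▸ Polynomial.natDegree_lt_natDegree hq0 hq
    have h := aeval_mulVec_eq_sum C e q hqk
    rw [hqC, hlow, Matrix.zero_mulVec] at h
    apply hq0
    ext i
    by_cases hi : i < k
    · simpa using (congrFun h ⟨i, hi⟩).symm
    · simpa using Polynomial.coeff_eq_zero_of_natDegree_lt (by omega : q.natDegree < i)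

lemma minpoly_units_conj {k : ℕ} (g : (Matrix (Fin k) (Fin k) ℂ)ˣ)
    (X : Matrix (Fin k) (Fin k) ℂ) :
    minpoly ℂ ((g : Matrix (Fin k) (Fin k) ℂ) * X * (↑g⁻¹ : Matrix (Fin k) (Fin k) ℂ))
      = minpoly ℂ X :=
  minpoly.algEquiv_eq (MulSemiringAction.toAlgEquiv ℂ (Matrix (Fin k) (Fin k) ℂ)
    (ConjAct.toConjAct g)) X

/-- Some vector has annihilator generated by the minimal polynomial: this is the structure theorem
for the finitely generated torsion `ℂ[t]`-module defined by `A`. -/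
lemma exists_vector_minpoly_dvd {k : ℕ} (A : Matrix (Fin k) (Fin k) ℂ) :
    ∃ v : Fin k → ℂ, ∀ q : Polynomial ℂ, Polynomial.aeval A q *ᵥ v = 0 → minpoly ℂ A ∣ q := by
  obtain ⟨x, hx⟩ := Module.exists_ker_toSpanSingleton_eq_annihilator (Polynomial ℂ)
    (Module.AEval' (Matrix.toLin' A))
  obtain ⟨v, rfl⟩ := (Module.AEval'.of _).surjective x
  refine ⟨v, fun q hq => ?_⟩
  rw [← Polynomial.span_minpoly_eq_annihilator ℂ, Matrix.minpoly_toLin'] at hx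
  rw [← Ideal.mem_span_singleton, ← hx, LinearMap.mem_ker, LinearMap.toSpanSingleton_apply,
    ← Module.AEval.of_aeval_smul]
  have h : Polynomial.aeval (Matrix.toLin' A) q = Matrix.toLin' (Polynomial.aeval A q) :=
    Polynomial.aeval_algHom_apply (Matrix.toLinAlgEquiv' : Matrix (Fin k) (Fin k) ℂ ≃ₐ[ℂ] _) A q
  simp [h, hq]

/-- Rational canonical form of a regular matrix. The conjugating matrix has columns `Aʲ v`, where
`v` is a cyclic vector. -/
lemma exists_conj_companionMatrix {k : ℕ} (A : Matrix (Fin k) (Fin k) ℂ)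
    (hA : (minpoly ℂ A).natDegree = k) :
    ∃ g : (Matrix (Fin k) (Fin k) ℂ)ˣ,
      A * (g : Matrix (Fin k) (Fin k) ℂ) =
        (g : Matrix (Fin k) (Fin k) ℂ) * companionMatrix (minpoly ℂ A) := by
  obtain ⟨v, hv⟩ := exists_vector_minpoly_dvd A
  set p := minpoly ℂ A with hp
  have hmonic : p.Monic := minpoly.monic (Matrix.isIntegral A)
  let G : Matrix (Fin k) (Fin k) ℂ := Matrix.of fun i j => (A ^ (j : ℕ) *ᵥ v) i
  have hG : ∀ c : Fin k → ℂ, G *ᵥ c = ∑ j, c j • (A ^ (j : ℕ) *ᵥ v) := by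
    intro c
    ext i
    simp [G, Matrix.mulVec, dotProduct, Finset.sum_apply, mul_comm]
  have hinj : Function.Injective G.mulVec := by
    rw [← Matrix.coe_mulVecLin, ← LinearMap.ker_eq_bot, LinearMap.ker_eq_bot']
    intro c hc
    rw [Matrix.mulVecLin_apply, hG] at hc
    -- A relation between the columns is a polynomial of degree `< k` killing `v`.
    let q : Polynomial ℂ := ∑ j : Fin k, Polynomial.monomial (j : ℕ) (c j)
    have hqv : Polynomial.aeval A q *ᵥ v = 0 := by
      simp only [q, map_sum, Polynomial.aeval_monomial, Matrix.sum_mulVec]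
      rw [← hc]
      refine Finset.sum_congr rfl fun j _ => ?_
      rw [← Algebra.smul_def, Matrix.smul_mulVec]
    have hqdeg : q.degree < p.degree := by
      rw [Polynomial.degree_eq_natDegree hmonic.ne_zero, hA]
      refine (Polynomial.degree_sum_le _ _).trans_lt ?_
      refine (Finset.sup_lt_iff (WithBot.bot_lt_coe k)).mpr fun j _ => ?_
      exact (Polynomial.degree_monomial_le _ _).trans_lt (WithBot.coe_lt_coe.mpr j.2)
    have hq0 : q = 0 := Polynomial.eq_zero_of_dvd_of_degree_lt (hv q hqv) hqdeg
    ext j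
    have h := congrArg (fun r => Polynomial.coeff r (j : ℕ)) hq0
    simpa [q, Polynomial.finsetSum_coeff, Polynomial.coeff_monomial, Fin.val_inj] using h
  obtain ⟨g, hg⟩ := Matrix.mulVec_injective_iff_isUnit.mp hinj
  refine ⟨g, ?_⟩
  rw [hg]
  refine Matrix.ext_of_mulVec_single fun j => ?_
  rw [← Matrix.mulVec_mulVec, ← Matrix.mulVec_mulVec, hG, hG]
  have hL : A *ᵥ (∑ i, (Pi.single j 1 : Fin k → ℂ) i • (A ^ (i : ℕ) *ᵥ v))
      = A ^ ((j : ℕ) + 1) *ᵥ v := by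
    rw [pow_succ', ← Matrix.mulVec_mulVec]
    simp [Pi.single_apply]
  rw [hL, Matrix.mulVec_single_one]
  by_cases hj : (j : ℕ) = k - 1
  · -- Last column: `p(A) v = 0` expresses `Aᵏ v` through the lower powers.
    have hk : (j : ℕ) + 1 = k := by omega
    have h0 : Polynomial.aeval A p *ᵥ v = 0 := by rw [hp, minpoly.aeval, Matrix.zero_mulVec]
    rw [aeval_mulVec_eq_sum A v p (n := k + 1) (by omega), Fin.sum_univ_castSucc] at h0
    simp only [Fin.val_castSucc, Fin.val_last] at h0
    have hlead : p.coeff k = 1 := by rw [← hA]; exact hmonic.coeff_natDegree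
    rw [hlead, one_smul] at h0
    rw [hk, eq_neg_of_add_eq_zero_right h0, ← Finset.sum_neg_distrib]
    refine Finset.sum_congr rfl fun i _ => ?_
    simp [companionMatrix, hj]
  · have hlt : (j : ℕ) + 1 < k := by omega
    rw [Finset.sum_eq_single (⟨(j : ℕ) + 1, hlt⟩ : Fin k)]
    · simp [companionMatrix, hj]
    · intro i _ hi
      have : (i : ℕ) ≠ (j : ℕ) + 1 := fun h => hi (Fin.ext h)
      simp [companionMatrix, hj, this]
    · simp

/-- for `F(g₁,g₂,X) = (g₁ g₂, g₁ X g₁⁻¹)` on `GL(k,ℂ) × GL(k,ℂ) × 𝒮`: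
(i) the image of `F` is exactly `GL(k,ℂ) × {regular matrices}`;
(ii) `F(g₁,g₂,X) = F(h₁,h₂,Y)` iff `Y = X` and there is `u` in the centralizer of `X`
with `h₁ = g₁ u`, `h₂ = u⁻¹ g₂`. Hence `F` induces a bijection from the quotient of
`GL × GL × 𝒮` by this relation onto `GL(k,ℂ) × 𝔤𝔩(k,ℂ)^{reg}`. -/
theorem stmt_11 (k : ℕ) :
    ({p : (Matrix (Fin k) (Fin k) ℂ)ˣ × Matrix (Fin k) (Fin k) ℂ |
        ∃ g₁ g₂ : (Matrix (Fin k) (Fin k) ℂ)ˣ, ∃ X ∈ slodowySlice k,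
          p = (g₁ * g₂,
            (g₁ : Matrix (Fin k) (Fin k) ℂ) * X * (↑g₁⁻¹ : Matrix (Fin k) (Fin k) ℂ))}
      = {p : (Matrix (Fin k) (Fin k) ℂ)ˣ × Matrix (Fin k) (Fin k) ℂ |
          (minpoly ℂ p.2).natDegree = k}) ∧
    ∀ (g₁ g₂ h₁ h₂ : (Matrix (Fin k) (Fin k) ℂ)ˣ),
      ∀ X ∈ slodowySlice k, ∀ Y ∈ slodowySlice k,
        ((g₁ * g₂, (g₁ : Matrix (Fin k) (Fin k) ℂ) * X * (↑g₁⁻¹ : Matrix (Fin k) (Fin k) ℂ))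
            = ((h₁ * h₂, (h₁ : Matrix (Fin k) (Fin k) ℂ) * Y * (↑h₁⁻¹ : Matrix (Fin k) (Fin k) ℂ))
              : (Matrix (Fin k) (Fin k) ℂ)ˣ × Matrix (Fin k) (Fin k) ℂ)
          ↔ Y = X ∧ ∃ u : (Matrix (Fin k) (Fin k) ℂ)ˣ,
              (u : Matrix (Fin k) (Fin k) ℂ) * X = X * (u : Matrix (Fin k) (Fin k) ℂ) ∧
              h₁ = g₁ * u ∧ h₂ = u⁻¹ * g₂) := by
  constructor
  · ext ⟨a, A⟩
    simp only [Set.mem_ofPred_eq]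
    constructor
    · rintro ⟨g₁, g₂, X, ⟨p, hp, hd, rfl⟩, h⟩
      obtain ⟨-, rfl⟩ := Prod.mk.inj h
      rw [minpoly_units_conj, minpoly_companionMatrix p hp hd, hd]
    · intro hA
      obtain ⟨g, hg⟩ := exists_conj_companionMatrix A hA
      refine ⟨g, g⁻¹ * a, _, ⟨minpoly ℂ A, minpoly.monic (Matrix.isIntegral A), hA, rfl⟩, ?_⟩
      rw [← hg]
      simp
  · rintro g₁ g₂ h₁ h₂ X hX Y hY
    rw [Prod.mk.injEq]
    constructor
    · rintro ⟨h1, h2⟩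
      have hYX : Y = X := by
        have h := congrArg (minpoly ℂ) h2
        rw [minpoly_units_conj, minpoly_units_conj] at h
        obtain ⟨p, hp, hdp, rfl⟩ := hX
        obtain ⟨q, hq, hdq, rfl⟩ := hY
        rw [minpoly_companionMatrix p hp hdp, minpoly_companionMatrix q hq hdq] at h
        rw [h]
      subst hYX
      refine ⟨rfl, g₁⁻¹ * h₁, ?_, by simp, ?_⟩
      · rw [Units.eq_mul_inv_iff_mul_eq] at h2
        rw [Units.val_mul, mul_assoc, ← h2]
        simp only [mul_assoc, Units.inv_mul_cancel_left]
      · rw [_root_.mul_inv_rev, inv_inv, mul_assoc, h1, inv_mul_cancel_left]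
    · rintro ⟨rfl, u, hu, rfl, rfl⟩
      refine ⟨by simp [mul_assoc], ?_⟩
      rw [_root_.mul_inv_rev, Units.val_mul, Units.val_mul, mul_assoc (g₁ : Matrix _ _ ℂ) _ Y, hu]
      simp only [mul_assoc, Units.mul_inv_cancel_left]
end

section
/- Let k ≥ 1, b ≥ 1, and let R = ℂ[ε]/(ε^k). Let x₁, …, x_b and y₁, …, y_b be elements of the free module Rᵏ such that for each j the reduction of x_j modulo ε and the reduction of y_j modulo ε are nonzero vectors in ℂᵏ. If x₁ ⊗_R ⋯ ⊗_R x_b = y₁ ⊗_R ⋯ ⊗_R y_b in the b-fold tensor product of Rᵏ over R, then there exist units λ₁, …, λ_b ∈ R^× with λ₁λ₂⋯λ_b = 1 and y_j = λ_j x_j for all j. -/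
/-!
Applying the coordinate functionals `v ↦ ∏ j, v j (f j)` to the tensor identity gives
`∏ j, x j (f j) = ∏ j, y j (f j)` for every multi-index `f`. Elements of `ℂ[ε]/(ε^k)` outside `(ε)`
are units, so there is a multi-index `p` with every `x j (p j)` a unit; the identity at `p` makes
every `y j (p j)` a unit as well. The scalars are `λ j = y j (p j) / x j (p j)`, with product `1` by
the identity at `p`; comparing the identity at `p` with the one where only the `j`-th index is
changed to `i` gives `y j i * x j (p j) = x j i * y j (p j)`.
-/

/-- The ring `R = ℂ[ε]/(ε^k)` of truncated polynomials. -/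
abbrev TruncPoly (k : ℕ) : Type :=
  Polynomial ℂ ⧸ Ideal.span ({(Polynomial.X : Polynomial ℂ) ^ k} : Set (Polynomial ℂ))

/-- The class `ε` of the variable in `ℂ[ε]/(ε^k)`. -/
noncomputable def eps (k : ℕ) : TruncPoly k :=
  Ideal.Quotient.mk _ (Polynomial.X : Polynomial ℂ)

/-- Holds because a polynomial not divisible by `X` is coprime to `X ^ k`. -/
lemma isUnit_of_notMem_span_eps {k : ℕ} {a : TruncPoly k}
    (ha : a ∉ Ideal.span ({eps k} : Set (TruncPoly k))) : IsUnit a := by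
  obtain ⟨q, rfl⟩ := Ideal.Quotient.mk_surjective a
  have hq : ¬ (Polynomial.X : Polynomial ℂ) ∣ q := fun hd =>
    ha (Ideal.mem_span_singleton.2 (map_dvd (Ideal.Quotient.mk _) hd))
  have hc : IsCoprime ((Polynomial.X : Polynomial ℂ) ^ k) q :=
    ((Polynomial.irreducible_X.coprime_iff_not_dvd).2 hq).pow_left
  obtain ⟨u, v, huv⟩ := hc
  refine IsUnit.of_mul_eq_one (Ideal.Quotient.mk _ v) ?_
  rw [← map_mul, ← map_one (Ideal.Quotient.mk _), Ideal.Quotient.eq, Ideal.mem_span_singleton]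
  exact ⟨-u, by linear_combination huv⟩

lemma prod_coord_eq_of_tprod_eq {R ι κ : Type*} [CommRing R] [Fintype ι]
    {x y : ι → κ → R} (h : PiTensorProduct.tprod R x = PiTensorProduct.tprod R y)
    (f : ι → κ) : ∏ j, x j (f j) = ∏ j, y j (f j) := by
  have := congrArg (PiTensorProduct.lift
    ((MultilinearMap.mkPiAlgebra R ι R).compLinearMap
      fun j => (LinearMap.proj (f j) : (κ → R) →ₗ[R] R))) h
  simpa using this

/-- Over any commutative ring, equal pure tensors whose first family has a unit coordinate in each
factor differ by units with product `1`. -/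
lemma exists_units_of_tprod_eq {R ι κ : Type*} [CommRing R] [Fintype ι]
    {x y : ι → κ → R} (hx : ∀ j, ∃ i, IsUnit (x j i))
    (h : PiTensorProduct.tprod R x = PiTensorProduct.tprod R y) :
    ∃ lam : ι → Rˣ, (∏ j, lam j) = 1 ∧ ∀ j, y j = (lam j : R) • x j := by
  classical
  choose p hp using hx
  have hP := prod_coord_eq_of_tprod_eq h p
  have hPu : IsUnit (∏ j, y j (p j)) := hP ▸ IsUnit.prod_univ_iff.2 hp
  have hq : ∀ j, IsUnit (y j (p j)) := IsUnit.prod_univ_iff.1 hPu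
  choose u hu using hp
  choose v hv using hq
  refine ⟨fun j => v j * (u j)⁻¹, ?_, fun j => funext fun i => ?_⟩
  · rw [Finset.prod_mul_distrib, Finset.prod_inv_distrib, mul_inv_eq_one]
    ext
    simp [Units.coe_prod, hu, hv, hP]
  · have hf := prod_coord_eq_of_tprod_eq h (Function.update p j i)
    rw [← Finset.mul_prod_erase _ _ (Finset.mem_univ j),
      ← Finset.mul_prod_erase _ _ (Finset.mem_univ j)] at hf
    have hother (z : ι → κ → R) : ∏ l ∈ Finset.univ.erase j, z l (Function.update p j i l) =
        ∏ l ∈ Finset.univ.erase j, z l (p l) :=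
      Finset.prod_congr rfl fun l hl => by
        rw [Function.update_of_ne (Finset.ne_of_mem_erase hl)]
    rw [hother, hother, Function.update_self] at hf
    have hPx := Finset.mul_prod_erase _ (fun l => x l (p l)) (Finset.mem_univ j)
    have hPy := Finset.mul_prod_erase _ (fun l => y l (p l)) (Finset.mem_univ j)
    have key : y j i * x j (p j) = x j i * y j (p j) := by
      apply hPu.mul_left_cancel
      linear_combination (-(x j (p j) * y j (p j))) * hf - y j i * x j (p j) * hPy
        + x j i * y j (p j) * (hPx + hP)
    rw [← hu, ← hv] at key
    rw [Pi.smul_apply, smul_eq_mul, Units.val_mul, mul_right_comm, Units.eq_mul_inv_iff_mul_eq, key,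
      mul_comm]

/-- let `R = ℂ[ε]/(ε^k)` with `k ≥ 1`, `b ≥ 1`, and let
`x₁,…,x_b, y₁,…,y_b ∈ Rᵏ` have nonzero reduction modulo `ε` (i.e. some coordinate
is not divisible by `ε`). If `x₁ ⊗_R ⋯ ⊗_R x_b = y₁ ⊗_R ⋯ ⊗_R y_b` in the `b`-fold
tensor product of `Rᵏ` over `R`, then there are units `λ₁,…,λ_b ∈ R^×` with
`λ₁⋯λ_b = 1` and `y_j = λ_j x_j` for all `j`. -/
theorem stmt_13 (k b : ℕ) (hk : 1 ≤ k) (hb : 1 ≤ b)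
    (x y : Fin b → (Fin k → TruncPoly k))
    (hx : ∀ j : Fin b, ∃ i : Fin k, x j i ∉ Ideal.span ({eps k} : Set (TruncPoly k)))
    (hy : ∀ j : Fin b, ∃ i : Fin k, y j i ∉ Ideal.span ({eps k} : Set (TruncPoly k)))
    (h : PiTensorProduct.tprod (TruncPoly k) x = PiTensorProduct.tprod (TruncPoly k) y) :
    ∃ lam : Fin b → (TruncPoly k)ˣ, (∏ j, lam j) = 1 ∧
      ∀ j : Fin b, y j = (lam j : TruncPoly k) • x j := by
  exact exists_units_of_tprod_eq
    (fun j => (hx j).imp fun _ hi => isUnit_of_notMem_span_eps hi) h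
end
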